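/- Let μ and ν be probability measures on (Q, O) with dν = (e^{-V}/Z) dμ for V measurable, Z = ∫ e^{-V} dμ ∈ (0, ∞), and suppose the Markov property holds for μ: for every F that is O_{Ω̄}-measurable, E^μ_{Ω^c} F = E^μ_{∂Ω} F, and suppose V = V_Ω + V_{Ω^c} with V_Ω being O_{Ω̄}-measurable and V_{Ω^c} being O_{Ω^c}-measurable, with all relevant integrability. Then ν also satisfies the Markov property: for F bounded and O_{Ω̄}-measurable, E^ν_{Ω^c} F = E^ν_{∂Ω} F, using the identity E^ν_A F = E^μ_A(F e^{-V_{A^c}}) / E^μ_A(e^{-V_{A^c}}). -/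

import Mathlib

/-!
Write `dν = f g dμ` with `f` measurable over the closed region `Ω̄` and `g` over its complement.
Bayes' formula `E^ν_A F = E^μ_A (F f g) / E^μ_A (f g)` with `A = Ω^c` lets `g` cancel, and the
Markov property of `μ` turns what is left into `E^μ_{∂Ω} (F f) / E^μ_{∂Ω} f`, which is
`O_{∂Ω}`-measurable; by the tower property it is then also `E^ν_{∂Ω} F`. This needs `f` to be
integrable. In general, factor `f = min f 1 * max f 1` and apply the argument first to the density
`min f 1 * g`, then to `max f 1`.
-/

open MeasureTheory Filter ProbabilityTheory
open scoped Topology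

section ConditionalExpectation

variable {Q : Type*} {m m' mQ : MeasurableSpace Q} {μ : Measure Q} {ρ ρ' F : Q → ℝ}

theorem integrable_withDensity_ofReal_iff (hρ : AEMeasurable ρ μ) (hρ_nonneg : 0 ≤ ρ) :
    Integrable F (μ.withDensity fun x => ENNReal.ofReal (ρ x)) ↔ Integrable (F * ρ) μ := by
  rw [integrable_withDensity_iff_integrable_smul₀' hρ.ennreal_ofReal (by simp)]
  simp only [ENNReal.toReal_ofReal (hρ_nonneg _), smul_eq_mul, mul_comm (ρ _)]
  rfl

theorem setIntegral_withDensity_ofReal (hρ : AEMeasurable ρ μ) (hρ_nonneg : 0 ≤ ρ)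
    {s : Set Q} (hs : MeasurableSet s) :
    ∫ x in s, F x ∂(μ.withDensity fun x => ENNReal.ofReal (ρ x)) =
      ∫ x in s, (F * ρ) x ∂μ := by
  rw [setIntegral_withDensity_eq_setIntegral_toReal_smul₀ hρ.ennreal_ofReal.restrict (by simp) _ hs]
  simp only [ENNReal.toReal_ofReal (hρ_nonneg _), smul_eq_mul, Pi.mul_apply, mul_comm]

theorem withDensity_ofReal_withDensity_ofReal (hρ : AEMeasurable ρ μ) (hρ' : AEMeasurable ρ' μ)
    (hρ'_nonneg : 0 ≤ ρ') :
    (μ.withDensity fun x => ENNReal.ofReal (ρ x)).withDensity (fun x => ENNReal.ofReal (ρ' x)) =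
      μ.withDensity fun x => ENNReal.ofReal ((ρ' * ρ) x) := by
  rw [← withDensity_mul₀ hρ.ennreal_ofReal hρ'.ennreal_ofReal]
  congr with x
  rw [Pi.mul_apply, Pi.mul_apply, ENNReal.ofReal_mul (hρ'_nonneg x), mul_comm]

theorem condExp_withDensity_mul_condExp (hm : m ≤ mQ) [SigmaFinite (μ.trim hm)]
    (hρ : Integrable ρ μ) (hρ_nonneg : 0 ≤ ρ)
    (hF : Integrable F (μ.withDensity fun x => ENNReal.ofReal (ρ x))) :
    (μ.withDensity fun x => ENNReal.ofReal (ρ x))[F | m] * μ[ρ | m] =ᵐ[μ] μ[F * ρ | m] := by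
  have : IsFiniteMeasure (μ.withDensity fun x => ENNReal.ofReal (ρ x)) :=
    isFiniteMeasure_withDensity_ofReal hρ.2
  set ν := μ.withDensity fun x => ENNReal.ofReal (ρ x)
  have integrable_mul {G : Q → ℝ} (hG : Integrable G ν) : Integrable (G * ρ) μ :=
    (integrable_withDensity_ofReal_iff hρ.aemeasurable hρ_nonneg).mp hG
  have pull_out : μ[ν[F | m] * ρ | m] =ᵐ[μ] ν[F | m] * μ[ρ | m] :=
    condExp_mul_of_stronglyMeasurable_left stronglyMeasurable_condExp
      (integrable_mul integrable_condExp) hρ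
  refine pull_out.symm.trans <| ae_eq_condExp_of_forall_setIntegral_eq hm (integrable_mul hF)
    (fun _ _ _ => integrable_condExp.integrableOn) (fun A hA _ => ?_)
    stronglyMeasurable_condExp.aestronglyMeasurable
  calc ∫ x in A, (μ[ν[F | m] * ρ | m]) x ∂μ
      = ∫ x in A, (ν[F | m] * ρ) x ∂μ :=
        setIntegral_condExp hm (integrable_mul integrable_condExp) hA
    _ = ∫ x in A, (ν[F | m]) x ∂ν :=
        (setIntegral_withDensity_ofReal hρ.aemeasurable hρ_nonneg (hm _ hA)).symm
    _ = ∫ x in A, F x ∂ν := setIntegral_condExp hm hF hA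
    _ = ∫ x in A, (F * ρ) x ∂μ :=
        setIntegral_withDensity_ofReal hρ.aemeasurable hρ_nonneg (hm _ hA)

theorem condExp_pos_ae_withDensity (hm : m ≤ mQ) [SigmaFinite (μ.trim hm)]
    (hρ : Integrable ρ μ) (hρ_nonneg : 0 ≤ ρ) :
    ∀ᵐ x ∂(μ.withDensity fun x => ENNReal.ofReal (ρ x)), 0 < (μ[ρ | m]) x := by
  have hA : MeasurableSet[m] {x | (μ[ρ | m]) x ≤ 0} :=
    stronglyMeasurable_condExp.measurableSet_le stronglyMeasurable_const
  simp only [ae_iff, not_lt]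
  rw [withDensity_apply _ (hm _ hA), ← ofReal_integral_eq_lintegral_ofReal hρ.integrableOn
    (ae_of_all _ hρ_nonneg), ← setIntegral_condExp hm hρ hA]
  exact ENNReal.ofReal_of_nonpos (setIntegral_nonpos (hm _ hA) fun _ hx => hx)

theorem condExp_ae_eq_condExp_of_aestronglyMeasurable (hm' : m' ≤ m) (hm : m ≤ mQ)
    [SigmaFinite (μ.trim (hm'.trans hm))] (hF : AEStronglyMeasurable[m'] μ[F | m] μ) :
    μ[F | m] =ᵐ[μ] μ[F | m'] :=
  have : SigmaFinite (μ.trim hm) := sigmaFiniteTrim_mono hm hm'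
  (condExp_of_aestronglyMeasurable' (hm'.trans hm) hF integrable_condExp).symm.trans
    (condExp_condExp_of_le hm' hm)

end ConditionalExpectation

section MarkovProperty

variable {Q : Type*}

/-- The Markov property of `μ` across a boundary: for bounded functions over the closed region
(`mΩbar`), conditioning on the exterior (`mΩc`) amounts to conditioning on the boundary (`mbd`).
The three regions enter only through their σ-algebras. -/
def HasMarkovProperty (mΩbar mΩc mbd : MeasurableSpace Q) {_ : MeasurableSpace Q}
    (μ : Measure Q) : Prop :=
  ∀ F : Q → ℝ, StronglyMeasurable[mΩbar] F → (∃ C, ∀ x, |F x| ≤ C) → μ[F | mΩc] =ᵐ[μ] μ[F | mbd]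

variable {mΩbar mΩc mbd mQ : MeasurableSpace Q} {μ : Measure Q} [IsFiniteMeasure μ] {f g : Q → ℝ}

theorem HasMarkovProperty.condExp_ae_eq_of_integrable (hμ : HasMarkovProperty mΩbar mΩc mbd μ)
    (hΩc : mΩc ≤ mQ) (hbd : mbd ≤ mQ) (hf : StronglyMeasurable[mΩbar] f) (hf_int : Integrable f μ) :
    μ[f | mΩc] =ᵐ[μ] μ[f | mbd] := by
  have tendsto_condExpL1 {m : MeasurableSpace Q} (hm : m ≤ mQ) :
      Tendsto (fun n : ℕ => condExpL1 hm μ (truncation f n)) atTop (𝓝 (condExpL1 hm μ f)) := by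
    refine tendsto_condExpL1_of_dominated_convergence hm (fun x => |f x|)
      (fun n => hf_int.1.truncation) hf_int.abs
      (fun n => ae_of_all _ (abs_truncation_le_abs_self f n)) (ae_of_all _ fun x => ?_)
    refine tendsto_const_nhds.congr' ?_
    filter_upwards [tendsto_natCast_atTop_atTop.eventually_gt_atTop |f x|] with n hn
    exact (truncation_eq_self hn).symm
  have truncation_eq (n : ℕ) :
      condExpL1 hΩc μ (truncation f n) = condExpL1 hbd μ (truncation f n) := by
    have truncation_meas : StronglyMeasurable[mΩbar] (truncation f n) :=
      ((measurable_id.indicator measurableSet_Ioc).comp hf.measurable).stronglyMeasurable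
    exact Lp.ext <| (condExp_ae_eq_condExpL1 hΩc _).symm.trans <|
      (hμ _ truncation_meas ⟨_, abs_truncation_le_bound f n⟩).trans (condExp_ae_eq_condExpL1 hbd _)
  have limit_eq : condExpL1 hΩc μ f = condExpL1 hbd μ f :=
    tendsto_nhds_unique (tendsto_condExpL1 hΩc) <| by
      simpa only [truncation_eq] using tendsto_condExpL1 hbd
  exact (condExp_ae_eq_condExpL1 hΩc f).trans (limit_eq ▸ (condExp_ae_eq_condExpL1 hbd f).symm)

theorem HasMarkovProperty.condExp_mul_ae_eq (hμ : HasMarkovProperty mΩbar mΩc mbd μ)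
    (hΩc : mΩc ≤ mQ) (hbd : mbd ≤ mQ)
    (hf : StronglyMeasurable[mΩbar] f) (hg : StronglyMeasurable[mΩc] g)
    (hf_int : Integrable f μ) (hfg : Integrable (f * g) μ) :
    μ[f * g | mΩc] =ᵐ[μ] μ[f | mbd] * g :=
  (condExp_mul_of_stronglyMeasurable_right hg hfg hf_int).trans <|
    (hμ.condExp_ae_eq_of_integrable hΩc hbd hf hf_int).mul .rfl

theorem HasMarkovProperty.condExp_withDensity_mul_ae_eq_div
    (hμ : HasMarkovProperty mΩbar mΩc mbd μ)
    (hΩbar : mΩbar ≤ mQ) (hΩc : mΩc ≤ mQ) (hbd : mbd ≤ mQ)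
    (hf : StronglyMeasurable[mΩbar] f) (hg : StronglyMeasurable[mΩc] g)
    (hf_nonneg : 0 ≤ f) (hg_nonneg : 0 ≤ g)
    (hf_int : Integrable f μ) (hfg : Integrable (f * g) μ)
    {F : Q → ℝ} {C : ℝ} (hF : StronglyMeasurable[mΩbar] F) (hC : ∀ x, |F x| ≤ C) :
    (μ.withDensity fun x => ENNReal.ofReal ((f * g) x))[F | mΩc]
      =ᵐ[μ.withDensity fun x => ENNReal.ofReal ((f * g) x)] μ[F * f | mbd] / μ[f | mbd] := by
  have hfg_nonneg : 0 ≤ f * g := mul_nonneg hf_nonneg hg_nonneg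
  have condExp_pos := condExp_pos_ae_withDensity hΩc hfg hfg_nonneg
  have : IsFiniteMeasure (μ.withDensity fun x => ENNReal.ofReal ((f * g) x)) :=
    isFiniteMeasure_withDensity_ofReal hfg.2
  set ν := μ.withDensity fun x => ENNReal.ofReal ((f * g) x)
  have hν : ν ≪ μ := withDensity_absolutelyContinuous _ _
  have hF_meas : StronglyMeasurable[mQ] F := hF.mono hΩbar
  have integrable_F_mul {h : Q → ℝ} (hh : Integrable h μ) : Integrable (F * h) μ :=
    hh.bdd_mul hF_meas.aestronglyMeasurable (ae_of_all _ hC)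
  have bayes : ν[F | mΩc] * μ[f * g | mΩc] =ᵐ[μ] μ[F * (f * g) | mΩc] :=
    condExp_withDensity_mul_condExp hΩc hfg hfg_nonneg
      (.of_bound hF_meas.aestronglyMeasurable C (ae_of_all _ hC))
  have denominator : μ[f * g | mΩc] =ᵐ[μ] μ[f | mbd] * g :=
    hμ.condExp_mul_ae_eq hΩc hbd hf hg hf_int hfg
  have numerator : μ[F * f * g | mΩc] =ᵐ[μ] μ[F * f | mbd] * g :=
    hμ.condExp_mul_ae_eq hΩc hbd (hF.mul hf) hg (integrable_F_mul hf_int)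
      (by simpa only [mul_assoc] using integrable_F_mul hfg)
  filter_upwards [hν.ae_le bayes, hν.ae_le numerator, hν.ae_le denominator, condExp_pos]
    with x bayes numerator denominator condExp_pos
  simp only [← mul_assoc, Pi.mul_apply] at bayes numerator denominator
  rw [denominator] at bayes condExp_pos
  rw [numerator, ← mul_assoc] at bayes
  exact (eq_div_iff (left_ne_zero_of_mul condExp_pos.ne')).mpr
    (mul_right_cancel₀ (right_ne_zero_of_mul condExp_pos.ne') bayes)

theorem HasMarkovProperty.withDensity_mul_of_integrable
    (hμ : HasMarkovProperty mΩbar mΩc mbd μ)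
    (hΩbar : mΩbar ≤ mQ) (hΩc : mΩc ≤ mQ) (hbd : mbd ≤ mΩc)
    (hf : StronglyMeasurable[mΩbar] f) (hg : StronglyMeasurable[mΩc] g)
    (hf_nonneg : 0 ≤ f) (hg_nonneg : 0 ≤ g)
    (hf_int : Integrable f μ) (hfg : Integrable (f * g) μ) :
    HasMarkovProperty mΩbar mΩc mbd
      (μ.withDensity fun x => ENNReal.ofReal ((f * g) x)) := by
  intro F hF ⟨C, hC⟩
  have : IsFiniteMeasure (μ.withDensity fun x => ENNReal.ofReal ((f * g) x)) :=
    isFiniteMeasure_withDensity_ofReal hfg.2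
  have quotient_meas : StronglyMeasurable[mbd] (μ[F * f | mbd] / μ[f | mbd]) :=
    (stronglyMeasurable_condExp.measurable.div
      stronglyMeasurable_condExp.measurable).stronglyMeasurable
  exact condExp_ae_eq_condExp_of_aestronglyMeasurable hbd hΩc ⟨_, quotient_meas,
    hμ.condExp_withDensity_mul_ae_eq_div hΩbar hΩc (hbd.trans hΩc) hf hg hf_nonneg hg_nonneg
      hf_int hfg hF hC⟩

theorem HasMarkovProperty.withDensity_of_integrable (hμ : HasMarkovProperty mΩbar mΩc mbd μ)
    (hΩbar : mΩbar ≤ mQ) (hΩc : mΩc ≤ mQ) (hbd : mbd ≤ mΩc)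
    (hf : StronglyMeasurable[mΩbar] f) (hf_nonneg : 0 ≤ f) (hf_int : Integrable f μ) :
    HasMarkovProperty mΩbar mΩc mbd (μ.withDensity fun x => ENNReal.ofReal (f x)) := by
  simpa only [mul_one] using hμ.withDensity_mul_of_integrable hΩbar hΩc hbd hf
    stronglyMeasurable_one hf_nonneg zero_le_one hf_int (by rwa [mul_one])

theorem stmt_19_general (hμ : HasMarkovProperty mΩbar mΩc mbd μ)
    (hΩbar : mΩbar ≤ mQ) (hΩc : mΩc ≤ mQ) (hbd : mbd ≤ mΩc)
    (hf : StronglyMeasurable[mΩbar] f) (hg : StronglyMeasurable[mΩc] g)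
    (hf_nonneg : 0 ≤ f) (hg_nonneg : 0 ≤ g) (hfg : Integrable (f * g) μ) :
    HasMarkovProperty mΩbar mΩc mbd
      (μ.withDensity fun x => ENNReal.ofReal ((f * g) x)) := by
  set fmin : Q → ℝ := fun x => min (f x) 1
  set fmax : Q → ℝ := fun x => max (f x) 1
  have hfmin : StronglyMeasurable[mΩbar] fmin :=
    (continuous_id.min continuous_const).comp_stronglyMeasurable hf
  have hfmax : StronglyMeasurable[mΩbar] fmax :=
    (continuous_id.max continuous_const).comp_stronglyMeasurable hf
  have hfmin_nonneg : 0 ≤ fmin := fun x => le_min (hf_nonneg x) zero_le_one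
  have hfmax_nonneg : 0 ≤ fmax := fun x => le_max_of_le_right zero_le_one
  have hfmin_g_nonneg : 0 ≤ fmin * g := mul_nonneg hfmin_nonneg hg_nonneg
  have factor : fmax * (fmin * g) = f * g := by
    ext x; simp only [fmax, fmin, Pi.mul_apply, ← mul_assoc, max_mul_min, mul_one]
  have hfmin_int : Integrable fmin μ := by
    refine .of_bound (hfmin.mono hΩbar).aestronglyMeasurable 1 (ae_of_all _ fun x => ?_)
    exact (Real.norm_of_nonneg (hfmin_nonneg x)).trans_le (min_le_right _ _)
  have hfmin_g : Integrable (fmin * g) μ := by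
    refine hfg.mono' ((hfmin.mono hΩbar).mul (hg.mono hΩc)).aestronglyMeasurable
      (ae_of_all _ fun x => ?_)
    exact (Real.norm_of_nonneg (hfmin_g_nonneg x)).trans_le
      (mul_le_mul_of_nonneg_right (min_le_left _ _) (hg_nonneg x))
  have hfmax_int : Integrable fmax (μ.withDensity fun x => ENNReal.ofReal ((fmin * g) x)) := by
    rwa [integrable_withDensity_ofReal_iff hfmin_g.aemeasurable hfmin_g_nonneg, factor]
  have : IsFiniteMeasure (μ.withDensity fun x => ENNReal.ofReal ((fmin * g) x)) :=
    isFiniteMeasure_withDensity_ofReal hfmin_g.2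
  rw [← factor, ← withDensity_ofReal_withDensity_ofReal hfmin_g.aemeasurable
    (hfmax.mono hΩbar).measurable.aemeasurable hfmax_nonneg]
  exact (hμ.withDensity_mul_of_integrable hΩbar hΩc hbd hfmin hg hfmin_nonneg hg_nonneg
    hfmin_int hfmin_g).withDensity_of_integrable hΩbar hΩc hbd hfmax hfmax_nonneg hfmax_int

end MarkovProperty

/-- Markov property for the interacting measure `dν = (e^{-V}/Z) dμ`: if `μ` satisfies
the Markov property (conditional expectation with respect to `O_{Ω^c}` of bounded
`O_{Ω̄}`-measurable functions agrees with that with respect to `O_{∂Ω}`), and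
`V = V_Ω + V_{Ω^c}` with `V_Ω` being `O_{Ω̄}`-measurable and `V_{Ω^c}` being
`O_{Ω^c}`-measurable, then `ν` satisfies the Markov property as well. -/
theorem stmt_19 {Q : Type*} {mO : MeasurableSpace Q} (μ : Measure Q)
    [IsProbabilityMeasure μ]
    (mΩbar mΩc mbd : MeasurableSpace Q)
    (h1 : mΩbar ≤ mO) (h2 : mΩc ≤ mO) (h3 : mbd ≤ mΩbar) (h4 : mbd ≤ mΩc)
    (V VΩ VΩc : Q → ℝ) (hV : V = VΩ + VΩc)
    (hVΩ : StronglyMeasurable[mΩbar] VΩ) (hVΩc : StronglyMeasurable[mΩc] VΩc)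
    (hint : Integrable (fun x => Real.exp (-V x)) μ)
    (hintc : Integrable (fun x => Real.exp (-VΩc x)) μ)
    (Z : ℝ) (hZ : Z = ∫ x, Real.exp (-V x) ∂μ) (hZpos : 0 < Z)
    (ν : @Measure Q mO)
    (hν : ν = μ.withDensity fun x => ENNReal.ofReal (Real.exp (-V x) / Z))
    (hMarkov : ∀ F : Q → ℝ, StronglyMeasurable[mΩbar] F → (∃ C, ∀ x, |F x| ≤ C) →
      μ[F|mΩc] =ᵐ[μ] μ[F|mbd]) :
    ∀ F : Q → ℝ, StronglyMeasurable[mΩbar] F → (∃ C, ∀ x, |F x| ≤ C) →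
      ν[F|mΩc] =ᵐ[ν] ν[F|mbd] := by
  have density (x : Q) : Real.exp (-V x) / Z = Real.exp (-VΩ x) / Z * Real.exp (-VΩc x) := by
    rw [hV, Pi.add_apply, neg_add, Real.exp_add, mul_div_right_comm]
  simp only [hν, density]
  exact stmt_19_general hMarkov h1 h2 h4
    ((Real.continuous_exp.div_const Z).comp_stronglyMeasurable hVΩ.neg)
    (Real.continuous_exp.comp_stronglyMeasurable hVΩc.neg)
    (fun x => by positivity) (fun x => by positivity)
    ((hint.div_const Z).congr (ae_of_all _ density))
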